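/- Let A be an affine hyperplane arrangement in ℝ^d and for j ∈ {0,…,d} let χ_{A,j}(t) = Σ_{L ∈ L_j(A)} χ_{A^L}(t) = Σ_{k=0}^j (−1)^{j−k} a_{kj} t^k be the j-th level characteristic polynomial. Then for every k ∈ {0,…,j} and every x ∈ ℝ^d outside a finite union of affine hyperplanes, Σ_{P ∈ R_j(A)} Σ_{F ∈ F_k(P)} 1_{F + N_F(P)}(x) = a_{kj}, where R_j(A) is the set of all j-dimensional faces of all closed chambers of A. -/

import Mathlib

open scoped RealInnerProductSpace Pointwise Classical
open Set

noncomputable section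

abbrev E (d : ℕ) : Type := EuclideanSpace ℝ (Fin d)

variable {d : ℕ}

/-- Positive hull: all finite nonnegative combinations of elements of `A`. -/
def posHull (A : Set (E d)) : Set (E d) :=
  {x | ∃ (n : ℕ) (c : Fin n → ℝ) (v : Fin n → E d),
    (∀ i, 0 ≤ c i) ∧ (∀ i, v i ∈ A) ∧ x = ∑ i, c i • v i}

/-- Dual (polar) cone. -/
def polarCone (C : Set (E d)) : Set (E d) := {z | ∀ y ∈ C, ⟪z, y⟫ ≤ 0}

/-- A polyhedral cone: finite intersection of linear closed half-spaces. -/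
def IsPolyCone (C : Set (E d)) : Prop :=
  ∃ (m : ℕ) (y : Fin m → E d), C = {z | ∀ i, ⟪z, y i⟫ ≤ 0}

/-- A polyhedral set: finite intersection of closed half-spaces. -/
def IsPolyhedron (P : Set (E d)) : Prop :=
  ∃ (m : ℕ) (y : Fin m → E d) (c : Fin m → ℝ), P = {z | ∀ i, ⟪z, y i⟫ ≤ c i}

/-- Faces of `P`: `P` itself, or intersections with supporting hyperplanes. -/
def IsFaceOf (P F : Set (E d)) : Prop :=
  F = P ∨ ∃ (y : E d) (c : ℝ), (∀ z ∈ P, ⟪y, z⟫ ≤ c) ∧ F = {z | z ∈ P ∧ ⟪y, z⟫ = c}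

/-- Dimension of a set: dimension of its affine hull. -/
def sdim (F : Set (E d)) : ℕ := Module.finrank ℝ (affineSpan ℝ F).direction

/-- The `k`-dimensional (nonempty) faces of `P`. -/
def facesOfDim (P : Set (E d)) (k : ℕ) : Set (Set (E d)) :=
  {F | IsFaceOf P F ∧ F.Nonempty ∧ sdim F = k}

/-- Tangent cone of `P` at a point `f₀`. -/
def tangentConeOf (P : Set (E d)) (f₀ : E d) : Set (E d) :=
  {u | ∃ δ : ℝ, 0 < δ ∧ f₀ + δ • u ∈ P}

/-- Normal cone of `P` at its face `F`: polar of the tangent cone at any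
relative interior point of `F`. -/
def normalCone (P F : Set (E d)) : Set (E d) :=
  {z | ∀ f₀ ∈ intrinsicInterior ℝ F, ∀ u ∈ tangentConeOf P f₀, ⟪z, u⟫ ≤ 0}

/-- `y` is a nearest point of `P` to `x`. -/
def IsNearestPt (P : Set (E d)) (x y : E d) : Prop :=
  y ∈ P ∧ ∀ z ∈ P, dist x y ≤ dist x z

/-- `dim(x,P) = k`: the metric projection of `x` onto `P` lies in the relative
interior of a `k`-dimensional face of `P`. -/
def projDimEq (P : Set (E d)) (x : E d) (k : ℕ) : Prop :=
  ∃ y F, IsNearestPt P x y ∧ IsFaceOf P F ∧ y ∈ intrinsicInterior ℝ F ∧ sdim F = k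

def IsHyperplane (H : Set (E d)) : Prop :=
  ∃ (y : E d) (c : ℝ), y ≠ 0 ∧ H = {z | ⟪y, z⟫ = c}

def IsLinearHyperplane (H : Set (E d)) : Prop :=
  ∃ y : E d, y ≠ 0 ∧ H = {z | ⟪y, z⟫ = 0}

/-- Closed chambers of the complement of the set `S`. -/
def IsChamberOfUnion (S P : Set (E d)) : Prop :=
  ∃ x : E d, x ∉ S ∧ P = closure (connectedComponentIn Sᶜ x)

/-- Closed chambers of the hyperplane arrangement `A`. -/
def IsChamber (A : Finset (Set (E d))) (P : Set (E d)) : Prop :=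
  IsChamberOfUnion (⋃ H ∈ A, H) P

/-- Intersection of a finite subcollection of hyperplanes (`⊤` for `∅`). -/
def interSet (B : Finset (Set (E d))) : Set (E d) := ⋂ H ∈ B, H

/-- The unsigned coefficient `a_k` of the characteristic polynomial:
`χ_A(t) = Σ_k (-1)^(d-k) a_k t^k` via Whitney's formula. -/
def charCoeff (A : Finset (Set (E d))) (k : ℕ) : ℤ :=
  (-1 : ℤ) ^ (d - k) *
    ∑ B ∈ A.powerset,
      if (interSet B).Nonempty ∧ sdim (interSet B) = k then (-1 : ℤ) ^ B.card else 0

/-- The `j`-dimensional members of the intersection lattice of `A`. -/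
def levels {d : ℕ} (A : Finset (Set (E d))) (j : ℕ) : Finset (Set (E d)) :=
  (A.powerset.image fun B => interSet B).filter fun L => L.Nonempty ∧ sdim L = j

/-- The restriction `A^L` of the arrangement `A` to a subspace `L`. -/
def restrict {d : ℕ} (A : Finset (Set (E d))) (L : Set (E d)) : Finset (Set (E d)) :=
  (A.image fun H => H ∩ L).filter fun M => M.Nonempty ∧ M ≠ L

/-- Unsigned coefficient `a_{k,L}` of the characteristic polynomial of an
arrangement inside the ambient `j`-dimensional space `L`
(Whitney's formula, with the empty intersection equal to `L`). -/
def charCoeffIn {d : ℕ} (L : Set (E d)) (A : Finset (Set (E d))) (j k : ℕ) : ℤ :=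
  (-1 : ℤ) ^ (j - k) *
    ∑ B ∈ A.powerset,
      if (interSet B ∩ L).Nonempty ∧ sdim (interSet B ∩ L) = k then (-1 : ℤ) ^ B.card
      else 0

/-- Unsigned coefficient `a_{kj}` of the `j`-th level characteristic
polynomial `χ_{A,j}(t) = Σ_{L ∈ L_j(A)} χ_{A^L}(t)`. -/
def levelCharCoeff {d : ℕ} (A : Finset (Set (E d))) (j k : ℕ) : ℤ :=
  ∑ L ∈ levels A j, charCoeffIn L (restrict A L) j k

/-!
The `j`-faces of the chambers are the regions of the restrictions of `A` to its `j`-dimensional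
flats. If `x` is generic, it lies in `F + N_F(P)` exactly when its metric projection onto `P` lies
in the relative interior of `F`, so the sum counts, flat by flat, the regions whose projection of
`x` lies in the relative interior of a `k`-face.

This count satisfies deletion-restriction. When a hyperplane cuts a closed region `K`, the half
containing the projection of `x` onto `K` has the same projection, while on the other half the
nearest point is the one on the cut. Hence adding a hyperplane adds exactly the count of the
restriction to it. Up to sign, Whitney's alternating sum over subarrangements, whose terms record
the dimension of the intersection, obeys the same recursion.

Genericity requires that the orthogonal projection of `x` onto a flat lies on a hyperplane of the
arrangement only if the whole flat does. A pair of a flat and a hyperplane not containing it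
excludes the zero set of a nonzero affine functional, so finitely many hyperplanes are excluded.
-/

section AlternatingSums

variable {ι κ R : Type*} [DecidableEq κ] [Ring R]

lemma sum_powerset_insert_neg_one_pow {a : κ} {s : Finset κ} (ha : a ∉ s) (g : Finset κ → R) :
    ∑ B ∈ (insert a s).powerset, (-1) ^ B.card * g B
      = ∑ B ∈ s.powerset, (-1) ^ B.card * (g B - g (insert a B)) := by
  rw [Finset.sum_powerset_insert ha, ← Finset.sum_add_distrib]
  refine Finset.sum_congr rfl fun B hB => ?_
  rw [Finset.card_insert_of_notMem fun h => ha (Finset.mem_powerset.1 hB h)]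
  noncomm_ring

lemma sum_powerset_neg_one_pow_image (f : ι → κ) (s : Finset ι) (g : Finset κ → R) :
    ∑ B ∈ s.powerset, (-1) ^ B.card * g (B.image f)
      = ∑ B ∈ (s.image f).powerset, (-1) ^ B.card * g B := by
  induction s using Finset.induction_on generalizing g with
  | empty => simp
  | insert a s ha ih =>
    rw [sum_powerset_insert_neg_one_pow ha fun B => g (B.image f)]
    simp only [Finset.image_insert]
    rw [ih fun B => g B - g (insert (f a) B)]
    by_cases hfa : f a ∈ s.image f
    · obtain ⟨S, hS, hins⟩ : ∃ S, f a ∉ S ∧ insert (f a) S = s.image f :=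
        ⟨_, Finset.notMem_erase _ _, Finset.insert_erase hfa⟩
      rw [Finset.insert_eq_of_mem hfa, ← hins, sum_powerset_insert_neg_one_pow hS,
        sum_powerset_insert_neg_one_pow hS]
      simp only [Finset.insert_idem, sub_self, sub_zero]
    · rw [sum_powerset_insert_neg_one_pow hfa]

end AlternatingSums

section MetricProjection

variable {V : Type*} [NormedAddCommGroup V] [InnerProductSpace ℝ V]

/-- `y` is the metric projection of `x` onto the convex set `K`, expressed by the variational
inequality characterising nearest points of convex sets. -/
def IsMetricProj (K : Set V) (x y : V) : Prop :=
  y ∈ K ∧ ∀ z ∈ K, ⟪x - y, z - y⟫ ≤ 0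

/-- The metric projection of `x` onto `K`; an arbitrary point if `K` has no point nearest to `x`. -/
def metricProj (K : Set V) (x : V) : V := Classical.epsilon (IsMetricProj K x)

variable {K : Set V} {x y y' : V}

lemma eq_of_inner_sub_nonpos (h : ⟪x - y, y' - y⟫ ≤ 0) (h' : ⟪x - y', y - y'⟫ ≤ 0) : y = y' := by
  have hadd : ⟪x - y, y' - y⟫ + ⟪x - y', y - y'⟫ = ‖y - y'‖ ^ 2 := by
    rw [← real_inner_self_eq_norm_sq]
    simp only [inner_sub_left, inner_sub_right]
    ring
  have hnorm : ‖y - y'‖ = 0 := by nlinarith [norm_nonneg (y - y')]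
  exact sub_eq_zero.1 (norm_eq_zero.1 hnorm)

lemma IsMetricProj.unique (h : IsMetricProj K x y) (h' : IsMetricProj K x y') : y = y' :=
  eq_of_inner_sub_nonpos (h.2 y' h'.1) (h'.2 y h.1)

lemma IsMetricProj.metricProj_eq (h : IsMetricProj K x y) : metricProj K x = y :=
  (Classical.epsilon_spec ⟨y, h⟩ : IsMetricProj K x (metricProj K x)).unique h

lemma isMetricProj_metricProj [CompleteSpace V] (hne : K.Nonempty) (hK : IsClosed K)
    (hconv : Convex ℝ K) (x : V) : IsMetricProj K x (metricProj K x) := by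
  obtain ⟨y, hy, hmin⟩ := exists_norm_eq_iInf_of_complete_convex hne hK.isComplete hconv x
  exact Classical.epsilon_spec ⟨y, hy, (norm_eq_iInf_iff_real_inner_le_zero hconv hy).1 hmin⟩

lemma IsMetricProj.mono {K' : Set V} (hK : K' ⊆ K) (h : IsMetricProj K x y) (hy : y ∈ K') :
    IsMetricProj K' x y :=
  ⟨hy, fun z hz => h.2 z (hK hz)⟩

lemma exists_lineMap_eq_zero (f : V →ᵃ[ℝ] ℝ) {a b : V} (ha : f a ≤ 0) (hb : 0 ≤ f b) :
    ∃ t ∈ Icc (0 : ℝ) 1, f (AffineMap.lineMap a b t) = 0 := by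
  have hcont : ContinuousOn (fun t : ℝ => f (AffineMap.lineMap a b t)) (Icc 0 1) := by
    simp only [AffineMap.apply_lineMap, AffineMap.lineMap_apply_ring']
    fun_prop
  exact intermediate_value_Icc zero_le_one hcont
    (show (0 : ℝ) ∈ Icc _ _ by simpa using ⟨ha, hb⟩)

lemma IsMetricProj.of_inter_zero (hconv : Convex ℝ K) {f : V →ᵃ[ℝ] ℝ} {p : V}
    (hp : IsMetricProj K x p) (hfp : 0 ≤ f p) (hy : IsMetricProj (K ∩ {z | f z = 0}) x y) :
    IsMetricProj (K ∩ {z | f z ≤ 0}) x y := by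
  refine ⟨⟨hy.1.1, hy.1.2.le⟩, fun z ⟨hzK, hfz⟩ => ?_⟩
  obtain ⟨t, ⟨ht0, ht1⟩, hft⟩ := exists_lineMap_eq_zero f hfz hfp
  have hcross := hy.2 _ ⟨hconv.lineMap_mem hzK hp.1 ⟨ht0, ht1⟩, hft⟩
  have hpy : 0 ≤ ⟪x - y, p - y⟫ := by
    have h := hp.2 y hy.1.1
    rw [← sub_add_sub_cancel x p y, inner_add_left]
    rw [← neg_sub p y, inner_neg_right] at h
    linarith [real_inner_self_nonneg (x := p - y)]
  rcases ht1.eq_or_lt with rfl | ht1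
  · rw [AffineMap.lineMap_apply_one] at hft
    rw [hy.unique (hp.mono inter_subset_left ⟨hp.1, hft⟩)]
    exact hp.2 z hzK
  · have hsub : AffineMap.lineMap z p t - y = (1 - t) • (z - y) + t • (p - y) := by
      rw [AffineMap.lineMap_apply_module]
      module
    rw [hsub, inner_add_right, inner_smul_right, inner_smul_right] at hcross
    exact nonpos_of_mul_nonpos_right (by linarith [mul_nonneg ht0 hpy]) (sub_pos.2 ht1)

-- The half containing the projection of `x` onto `K` has the same projection, and the projection
-- onto the other half lies on `{f = 0}`.
lemma metricProj_halves {M : Type*} [AddCommMonoid M] [FiniteDimensional ℝ V] (D : V → M)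
    (hclosed : IsClosed K) (hconv : Convex ℝ K) (f : V →ᵃ[ℝ] ℝ)
    (hne : (K ∩ {z | f z = 0}).Nonempty) (x : V) :
    D (metricProj (K ∩ {z | 0 ≤ f z}) x) + D (metricProj (K ∩ {z | f z ≤ 0}) x)
      = D (metricProj K x) + D (metricProj (K ∩ {z | f z = 0}) x) := by
  have hp := isMetricProj_metricProj hne.left hclosed hconv x
  wlog hfp : 0 ≤ f (metricProj K x) generalizing f
  · have h := this (-f) (by simpa using hne) (by simpa using (not_le.1 hfp).le)
    simp only [AffineMap.coe_neg, Pi.neg_apply, neg_nonneg, neg_nonpos, neg_eq_zero] at h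
    rwa [add_comm]
  have hfcont : Continuous f := f.continuous_of_finiteDimensional
  have hy := isMetricProj_metricProj hne
    (hclosed.inter (isClosed_eq hfcont continuous_const))
    (hconv.inter ((convex_singleton (0 : ℝ)).affine_preimage f)) x
  rw [(hp.mono inter_subset_left ⟨hp.1, hfp⟩).metricProj_eq,
    (hp.of_inter_zero hconv hfp hy).metricProj_eq]

end MetricProjection

section Flats

variable {V : Type*} [NormedAddCommGroup V] [InnerProductSpace ℝ V]

/-- The zero set of an affine functional, as an affine subspace: a hyperplane unless the functional
is constant. -/
def zeroLocus (f : V →ᵃ[ℝ] ℝ) : AffineSubspace ℝ V := (AffineSubspace.mk' 0 ⊥).comap f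

/-- The flat cut out of `L` by a finite set of affine functionals. Finite sets of functionals
replace arrangements of hyperplanes throughout, so that sides of hyperplanes can be named. -/
def flat (L : AffineSubspace ℝ V) (G : Finset (V →ᵃ[ℝ] ℝ)) : AffineSubspace ℝ V :=
  L ⊓ ⨅ f ∈ G, zeroLocus f

/-- The smallest flat of the arrangement `G` in `L` that contains the point `y` of `L`. -/
def flatAt (L : AffineSubspace ℝ V) (G : Finset (V →ᵃ[ℝ] ℝ)) (y : V) : AffineSubspace ℝ V :=
  flat L (G.filter (· y = 0))

variable {L : AffineSubspace ℝ V} {G G' : Finset (V →ᵃ[ℝ] ℝ)} {f : V →ᵃ[ℝ] ℝ} {y z : V}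

@[simp]
lemma mem_zeroLocus : z ∈ zeroLocus f ↔ f z = 0 := by
  simp [zeroLocus]

lemma mem_flat : z ∈ flat L G ↔ z ∈ L ∧ ∀ f ∈ G, f z = 0 := by
  simp [flat, AffineSubspace.mem_inf_iff, AffineSubspace.mem_iInf_iff]

lemma flat_empty : flat L ∅ = L := by
  simp [flat]

lemma flat_insert : flat L (insert f G) = flat (L ⊓ zeroLocus f) G := by
  ext z
  simp [mem_flat, AffineSubspace.mem_inf_iff, and_assoc]

lemma flat_flat : flat (flat L G) G' = flat L (G ∪ G') := by
  ext z
  simp only [mem_flat, Finset.mem_union, or_imp, forall_and, and_assoc]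

lemma mem_flatAt : z ∈ flatAt L G y ↔ z ∈ L ∧ ∀ f ∈ G, f y = 0 → f z = 0 := by
  simp [flatAt, mem_flat]

lemma self_mem_flatAt (hy : y ∈ L) : y ∈ flatAt L G y :=
  mem_flatAt.2 ⟨hy, fun _ _ => id⟩

lemma flatAt_flatAt : flatAt (flatAt L G y) G y = flatAt L G y := by
  ext z
  simp only [mem_flatAt, and_assoc, and_self]

lemma finrank_direction_inf_zeroLocus [FiniteDimensional ℝ V]
    (hne : (L ⊓ zeroLocus f : AffineSubspace ℝ V) ≠ ⊥) (hL : ¬ L ≤ zeroLocus f) :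
    Module.finrank ℝ L.direction
      = Module.finrank ℝ (L ⊓ zeroLocus f : AffineSubspace ℝ V).direction + 1 := by
  obtain ⟨q, hq⟩ := (AffineSubspace.nonempty_iff_ne_bot _).2 hne
  obtain ⟨w, hwL, hw⟩ := SetLike.not_le_iff_exists.1 hL
  obtain ⟨hqL, hfq⟩ := (AffineSubspace.mem_inf_iff _ _ _).1 hq
  have hdir : (zeroLocus f).direction = LinearMap.ker f.linear := by
    ext v
    rw [← AffineSubspace.vadd_mem_iff_mem_direction v hfq, mem_zeroLocus, f.map_vadd,
      mem_zeroLocus.1 hfq, vadd_eq_add, add_zero, LinearMap.mem_ker]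
  have hne0 : f.linear.domRestrict L.direction ≠ 0 := fun h0 => hw <| by
    have h := LinearMap.congr_fun h0 ⟨w - q, AffineSubspace.vsub_mem_direction hwL hqL⟩
    have hsub : f.linear (w - q) = f w - f q := f.linearMap_vsub w q
    simpa [hsub, mem_zeroLocus.1 hfq] using h
  rw [AffineSubspace.direction_inf_of_mem hqL hfq, hdir,
    ← Module.Dual.finrank_ker_add_one_of_ne_zero hne0, LinearMap.ker_domRestrict,
    ← Submodule.finrank_map_subtype_eq, Submodule.map_comap_subtype]

end Flats

section Regions

variable {V : Type*} [NormedAddCommGroup V] [InnerProductSpace ℝ V]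

/-- The closed region of `L` on which all functionals in `G` are nonnegative. -/
def closedRegion (L : AffineSubspace ℝ V) (G : Finset (V →ᵃ[ℝ] ℝ)) : Set V :=
  {z | z ∈ L ∧ ∀ f ∈ G, 0 ≤ f z}

/-- The relatively open region of `L` on which all functionals in `G` are positive. -/
def openRegion (L : AffineSubspace ℝ V) (G : Finset (V →ᵃ[ℝ] ℝ)) : Set V :=
  {z | z ∈ L ∧ ∀ f ∈ G, 0 < f z}

variable {L : AffineSubspace ℝ V} {G : Finset (V →ᵃ[ℝ] ℝ)} {h : V →ᵃ[ℝ] ℝ} {p x y z w : V}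

lemma openRegion_subset_closedRegion : openRegion L G ⊆ closedRegion L G :=
  fun _ hz => ⟨hz.1, fun f hf => (hz.2 f hf).le⟩

lemma mem_openRegion_iff : z ∈ openRegion L G ↔ z ∈ closedRegion L G ∧ ∀ f ∈ G, f z ≠ 0 :=
  ⟨fun hz => ⟨openRegion_subset_closedRegion hz, fun f hf => (hz.2 f hf).ne'⟩,
    fun hz => ⟨hz.1.1, fun f hf => (hz.1.2 f hf).lt_of_ne' (hz.2 f hf)⟩⟩

lemma closedRegion_insert : closedRegion L (insert h G) = closedRegion L G ∩ {z | 0 ≤ h z} := by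
  ext z
  simp only [closedRegion, Finset.forall_mem_insert, mem_ofPred_eq, mem_inter_iff]
  tauto

lemma closedRegion_insert_neg :
    closedRegion L (insert (-h) G) = closedRegion L G ∩ {z | h z ≤ 0} := by
  rw [closedRegion_insert]
  simp only [AffineMap.coe_neg, Pi.neg_apply, neg_nonneg]

lemma openRegion_insert : openRegion L (insert h G) = openRegion L G ∩ {z | 0 < h z} := by
  ext z
  simp only [openRegion, Finset.forall_mem_insert, mem_ofPred_eq, mem_inter_iff]
  tauto

lemma closedRegion_inf_zeroLocus :
    closedRegion (L ⊓ zeroLocus h) G = closedRegion L G ∩ {z | h z = 0} := by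
  ext z
  simp only [closedRegion, AffineSubspace.mem_inf_iff, mem_zeroLocus, mem_ofPred_eq, mem_inter_iff]
  tauto

lemma openRegion_inf_zeroLocus :
    openRegion (L ⊓ zeroLocus h) G = openRegion L G ∩ {z | h z = 0} := by
  ext z
  simp only [openRegion, AffineSubspace.mem_inf_iff, mem_zeroLocus, mem_ofPred_eq, mem_inter_iff]
  tauto

lemma closedRegion_eq_inter : closedRegion L G = (L : Set V) ∩ ⋂ f ∈ G, {z | 0 ≤ f z} := by
  ext z
  simp [closedRegion]

lemma openRegion_eq_inter : openRegion L G = (L : Set V) ∩ ⋂ f ∈ G, {z | 0 < f z} := by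
  ext z
  simp [openRegion]

lemma convex_closedRegion : Convex ℝ (closedRegion L G) := by
  rw [closedRegion_eq_inter]
  exact L.convex.inter (convex_iInter₂ fun f _ => (convex_Ici (0 : ℝ)).affine_preimage f)

lemma convex_openRegion : Convex ℝ (openRegion L G) := by
  rw [openRegion_eq_inter]
  exact L.convex.inter (convex_iInter₂ fun f _ => (convex_Ioi (0 : ℝ)).affine_preimage f)

lemma flatAt_eq_of_mem_openRegion (hp : p ∈ openRegion L G) : flatAt L G p = L := by
  ext z
  exact mem_flatAt.trans ⟨And.left, fun hz => ⟨hz, fun f hf h0 => absurd h0 (hp.2 f hf).ne'⟩⟩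

lemma lineMap_mem_openRegion (hz : z ∈ closedRegion L G) (hp : p ∈ openRegion L G) {t : ℝ}
    (ht : t ∈ Ioc 0 1) : AffineMap.lineMap z p t ∈ openRegion L G := by
  refine ⟨AffineMap.lineMap_mem t hz.1 hp.1, fun f hf => ?_⟩
  rw [AffineMap.apply_lineMap, AffineMap.lineMap_apply_ring]
  nlinarith [mul_pos ht.1 (hp.2 f hf), mul_nonneg (sub_nonneg.2 ht.2) (hz.2 f hf)]

lemma eventually_lineMap_mem_closedRegion (hy : y ∈ closedRegion L G) (hw : w ∈ flatAt L G y) :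
    ∀ᶠ t in nhds (0 : ℝ), AffineMap.lineMap y w t ∈ closedRegion L G := by
  obtain ⟨hwL, hwG⟩ := mem_flatAt.1 hw
  have hsign : ∀ f ∈ G, ∀ᶠ t in nhds (0 : ℝ), 0 ≤ f (AffineMap.lineMap y w t) := by
    intro f hf
    simp only [AffineMap.apply_lineMap, AffineMap.lineMap_apply_ring']
    rcases (hy.2 f hf).eq_or_lt with h0 | hpos
    · simp [← h0, hwG f hf h0.symm]
    · have hcont : Continuous fun t : ℝ => t * (f w - f y) + f y := by fun_prop
      filter_upwards [hcont.continuousAt.eventually_const_lt (by simpa using hpos)] with t ht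
      exact ht.le
  filter_upwards [(Filter.eventually_all_finset G).2 hsign] with t ht
  exact ⟨AffineMap.lineMap_mem t hy.1 hwL, ht⟩

lemma eq_of_eventually_lineMap_le (h : V →ᵃ[ℝ] ℝ)
    (hmax : ∀ᶠ t in nhds (0 : ℝ), h (AffineMap.lineMap y w t) ≤ h y) : h w = h y := by
  simp only [AffineMap.apply_lineMap, AffineMap.lineMap_apply_ring'] at hmax
  have hloc : IsLocalMax (fun t : ℝ => t * (h w - h y) + h y) 0 := by
    simpa [IsLocalMax, IsMaxFilter] using hmax
  have hder : HasDerivAt (fun t : ℝ => t * (h w - h y) + h y) (1 * (h w - h y)) 0 :=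
    ((hasDerivAt_id 0).mul_const _).add_const _
  simpa [sub_eq_zero] using hloc.hasDerivAt_eq_zero hder

lemma eq_of_isMaxOn_closedRegion (hmax : IsMaxOn h (closedRegion L G) y)
    (hy : y ∈ closedRegion L G) (hw : w ∈ flatAt L G y) : h w = h y :=
  eq_of_eventually_lineMap_le h
    ((eventually_lineMap_mem_closedRegion hy hw).mono fun _ ht => hmax ht)

lemma mem_orthogonal_direction_flatAt {n : V} (hmax : IsMaxOn (⟪n, ·⟫) (closedRegion L G) y)
    (hy : y ∈ closedRegion L G) : n ∈ (flatAt L G y).directionᗮ := by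
  refine (Submodule.mem_orthogonal' _ _).2 fun v hv => ?_
  have hvy := (AffineSubspace.vadd_mem_iff_mem_direction v (self_mem_flatAt (G := G) hy.1)).2 hv
  have h : ⟪n, v + y⟫ = ⟪n, y⟫ :=
    eq_of_isMaxOn_closedRegion (h := (innerₗ V n).toAffineMap) hmax hy hvy
  rwa [inner_add_right, add_eq_right] at h

lemma IsMetricProj.sub_mem_orthogonal (hy : IsMetricProj (closedRegion L G) x y) :
    x - y ∈ (flatAt L G y).directionᗮ :=
  mem_orthogonal_direction_flatAt
    (fun z hz => sub_nonpos.1 ((inner_sub_right (x - y) z y).symm.trans_le (hy.2 z hz))) hy.1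

lemma affineSpan_closedRegion (hy : y ∈ closedRegion L G) (hL : flatAt L G y = L) :
    affineSpan ℝ (closedRegion L G) = L := by
  refine le_antisymm (affineSpan_le.2 fun z hz => hz.1) fun w hw => ?_
  have hev := eventually_lineMap_mem_closedRegion hy (hL.symm ▸ hw)
  obtain ⟨t, ht, ht0⟩ :=
    ((hev.filter_mono nhdsWithin_le_nhds).and (self_mem_nhdsWithin (s := {0}ᶜ))).exists
  have hline : AffineMap.lineMap y (AffineMap.lineMap y w t) t⁻¹ = w := by
    rw [AffineMap.lineMap_lineMap_right, inv_mul_cancel₀ ht0, AffineMap.lineMap_apply_one]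
  rw [← hline]
  exact AffineMap.lineMap_mem _ (subset_affineSpan ℝ _ hy) (subset_affineSpan ℝ _ ht)

lemma affineSpan_closedRegion_of_nonempty (hne : (openRegion L G).Nonempty) :
    affineSpan ℝ (closedRegion L G) = L := by
  obtain ⟨p, hp⟩ := hne
  exact affineSpan_closedRegion (openRegion_subset_closedRegion hp) (flatAt_eq_of_mem_openRegion hp)

variable [FiniteDimensional ℝ V]

lemma isClosed_closedRegion : IsClosed (closedRegion L G) := by
  rw [closedRegion_eq_inter]
  exact L.closed_of_finiteDimensional.inter (isClosed_biInter fun f _ =>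
    isClosed_le continuous_const f.continuous_of_finiteDimensional)

lemma closure_openRegion (hne : (openRegion L G).Nonempty) :
    closure (openRegion L G) = closedRegion L G := by
  refine (closure_minimal openRegion_subset_closedRegion isClosed_closedRegion).antisymm
    fun z hz => ?_
  obtain ⟨p, hp⟩ := hne
  have hcont : Continuous fun t : ℝ => AffineMap.lineMap z p t := AffineMap.lineMap_continuous
  have hlim : Filter.Tendsto (fun t : ℝ => AffineMap.lineMap z p t) (nhdsWithin 0 (Ioi 0))
      (nhds z) := by
    simpa using (hcont.tendsto 0).mono_left nhdsWithin_le_nhds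
  refine mem_closure_of_tendsto hlim ?_
  filter_upwards [Ioc_mem_nhdsGT zero_lt_one] with t ht using lineMap_mem_openRegion hz hp ht

lemma openRegion_insert_nonempty (hp : p ∈ openRegion L G) (hhp : h p = 0)
    (hL : ¬ L ≤ zeroLocus h) : (openRegion L (insert h G)).Nonempty := by
  by_contra hempty
  rw [openRegion_insert] at hempty
  have hneg : openRegion L G ⊆ {z | h z ≤ 0} := fun z hz =>
    mem_ofPred_eq ▸ not_lt.1 fun hpos => hempty ⟨z, hz, hpos⟩
  have hmax : closedRegion L G ⊆ {z | h z ≤ 0} := by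
    rw [← closure_openRegion ⟨p, hp⟩]
    exact closure_minimal hneg (isClosed_le h.continuous_of_finiteDimensional continuous_const)
  refine hL fun w hw => mem_zeroLocus.2 ?_
  rw [← hhp]
  refine eq_of_isMaxOn_closedRegion (fun z hz => ?_) (openRegion_subset_closedRegion hp)
    ((flatAt_eq_of_mem_openRegion hp).symm ▸ hw)
  simpa [hhp] using hmax hz

end Regions

section Genericity

variable {V : Type*} [NormedAddCommGroup V] [InnerProductSpace ℝ V]

/-- The point `x` is generic for the arrangement `G` in `L`: its orthogonal projection onto a flat
lies on a hyperplane of the arrangement only if the whole flat does. -/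
def IsGeneric (L : AffineSubspace ℝ V) (G : Finset (V →ᵃ[ℝ] ℝ)) (x : V) : Prop :=
  ∀ B ⊆ G, ∀ f ∈ G, ∀ y ∈ flat L B, x - y ∈ (flat L B).directionᗮ → f y = 0 →
    flat L B ≤ zeroLocus f

variable {L : AffineSubspace ℝ V} {F G G' : Finset (V →ᵃ[ℝ] ℝ)} {f h : V →ᵃ[ℝ] ℝ} {x y : V}

lemma IsGeneric.flat_left {B : Finset (V →ᵃ[ℝ] ℝ)} (hx : IsGeneric L F x) (hB : B ⊆ F)
    (hG : G ⊆ F) : IsGeneric (flat L B) G x := by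
  intro B' hB' f hf
  rw [flat_flat]
  exact hx _ (Finset.union_subset hB (hB'.trans hG)) f (hG hf)

lemma IsGeneric.inf_zeroLocus (hx : IsGeneric L F x) (hf : f ∈ F) (hG : G ⊆ F) :
    IsGeneric (L ⊓ zeroLocus f) G x := by
  rw [← flat_empty (L := L ⊓ zeroLocus f), ← flat_insert]
  exact hx.flat_left (by simpa using hf) hG

lemma IsGeneric.of_zeroLocus (hx : IsGeneric L G x)
    (hG' : ∀ g ∈ G', ∃ f ∈ G, zeroLocus g = zeroLocus f) : IsGeneric L G' x := by
  choose! φ hφG hφ using hG'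
  intro B hB f hf
  have hflat : flat L B = flat L (B.image φ) := by
    ext z
    simp only [mem_flat, Finset.forall_mem_image, ← mem_zeroLocus]
    exact and_congr_right fun _ => forall₂_congr fun g hg => by rw [hφ g (hB hg)]
  rw [hflat, hφ f hf]
  intro y hy hperp hfy
  exact hx _ (Finset.image_subset_iff.2 fun g hg => hφG g (hB hg)) _ (hφG f hf) y hy hperp
    (mem_zeroLocus.1 (hφ f hf ▸ mem_zeroLocus.2 hfy))

lemma zeroLocus_neg : zeroLocus (-f) = zeroLocus f := by
  ext z
  simp

lemma IsGeneric.insert_neg (hx : IsGeneric L (insert h G) x) : IsGeneric L (insert (-h) G) x := by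
  refine hx.of_zeroLocus fun g hg => ?_
  rcases Finset.mem_insert.1 hg with rfl | hg
  · exact ⟨h, Finset.mem_insert_self _ _, zeroLocus_neg⟩
  · exact ⟨g, Finset.mem_insert_of_mem hg, rfl⟩

lemma IsGeneric.flatAt_insert (hx : IsGeneric L (insert h G) x)
    (hy : IsMetricProj (closedRegion L G) x y) : flatAt L (insert h G) y = flatAt L G y := by
  rw [flatAt, Finset.filter_insert]
  split_ifs with hhy
  · have hle : flatAt L G y ≤ zeroLocus h :=
      hx _ ((Finset.filter_subset _ _).trans (Finset.subset_insert _ _)) h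
        (Finset.mem_insert_self _ _) y (self_mem_flatAt hy.1.1) hy.sub_mem_orthogonal hhy
    refine le_antisymm (fun z hz => ?_) fun z hz => ?_
    · obtain ⟨hzL, hzG⟩ := mem_flat.1 hz
      exact mem_flat.2 ⟨hzL, fun f hf => hzG f (Finset.mem_insert_of_mem hf)⟩
    · obtain ⟨hzL, hzG⟩ := mem_flat.1 hz
      exact mem_flat.2 ⟨hzL, (Finset.forall_mem_insert _ _ _).2 ⟨mem_zeroLocus.1 (hle hz), hzG⟩⟩
  · rfl

end Genericity

section DeletionRestriction

variable {V : Type*} [NormedAddCommGroup V] [InnerProductSpace ℝ V]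

/-- `L` is nonempty of dimension `k`. -/
def HasDim (L : AffineSubspace ℝ V) (k : ℕ) : Prop :=
  L ≠ ⊥ ∧ Module.finrank ℝ L.direction = k

/-- The functionals of `s` with those outside `T` negated: the open regions of the arrangement `s`
are the nonempty ones among `openRegion L (orient T s)` for `T ⊆ s`. -/
def orient (T s : Finset (V →ᵃ[ℝ] ℝ)) : Finset (V →ᵃ[ℝ] ℝ) :=
  s.image fun f => if f ∈ T then f else -f

/-- The region of `L` cut out by `G` is full-dimensional, and the smallest flat through the metric
projection of `x` onto it, hence the face whose relative interior contains that projection, has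
dimension `k`. -/
def HasProjDim (k : ℕ) (x : V) (L : AffineSubspace ℝ V) (G : Finset (V →ᵃ[ℝ] ℝ)) : Prop :=
  (openRegion L G).Nonempty ∧
    HasDim (flatAt L G (metricProj (closedRegion L G) x)) k

/-- The number of regions of the arrangement `s` in `L` onto which `x` projects in the relative
interior of a `k`-dimensional face. -/
def regionCount (k : ℕ) (x : V) (L : AffineSubspace ℝ V) (s : Finset (V →ᵃ[ℝ] ℝ)) : ℕ :=
  (s.powerset.filter fun T => HasProjDim k x L (orient T s)).card

/-- Whitney's alternating sum for the `k`-th coefficient of the characteristic polynomial of the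
arrangement `s` in `L`. -/
def whitneySum (k : ℕ) (L : AffineSubspace ℝ V) (s : Finset (V →ᵃ[ℝ] ℝ)) : ℤ :=
  ∑ B ∈ s.powerset, (-1) ^ B.card *
    if HasDim (flat L B) k then 1 else 0

variable {L : AffineSubspace ℝ V} {G s T : Finset (V →ᵃ[ℝ] ℝ)} {a f h : V →ᵃ[ℝ] ℝ} {p x y z : V}
  {k : ℕ}

lemma mem_openRegion_orient :
    z ∈ openRegion L (orient T s) ↔ z ∈ L ∧ ∀ f ∈ s, f z ≠ 0 ∧ (f ∈ T ↔ 0 < f z) := by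
  simp only [openRegion, orient, Finset.forall_mem_image, mem_ofPred_eq]
  refine and_congr_right fun _ => forall₂_congr fun f _ => ?_
  split_ifs with hf
  · simpa [hf] using ne_of_gt
  · simp only [hf, false_iff, not_lt, AffineMap.coe_neg, Pi.neg_apply, neg_pos]
    exact ⟨fun h => ⟨h.ne, h.le⟩, fun h => h.2.lt_of_ne h.1⟩

lemma orient_insert_of_subset (ha : a ∉ s) (hT : T ⊆ s) :
    orient T (insert a s) = insert (-a) (orient T s) := by
  rw [orient, Finset.image_insert, if_neg fun h => ha (hT h), orient]

lemma orient_insert_insert (ha : a ∉ s) :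
    orient (insert a T) (insert a s) = insert a (orient T s) := by
  rw [orient, Finset.image_insert, if_pos (Finset.mem_insert_self _ _), orient]
  refine congrArg (insert a) (Finset.image_congr fun f hf => ?_)
  have hfa : f ≠ a := fun h => ha (h ▸ hf)
  simp only [Finset.mem_insert, hfa, false_or]

lemma exists_zeroLocus_eq_of_mem_orient {g : V →ᵃ[ℝ] ℝ} (hg : g ∈ orient T s) :
    ∃ f ∈ s, zeroLocus g = zeroLocus f := by
  obtain ⟨f, hf, rfl⟩ := Finset.mem_image.1 hg
  refine ⟨f, hf, ?_⟩
  split_ifs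
  · rfl
  · exact zeroLocus_neg

lemma IsGeneric.insert_orient (hx : IsGeneric L (insert a s) x) :
    IsGeneric L (insert a (orient T s)) x := by
  refine hx.of_zeroLocus fun g hg => ?_
  rcases Finset.mem_insert.1 hg with rfl | hg
  · exact ⟨g, Finset.mem_insert_self _ _, rfl⟩
  · obtain ⟨f, hf, hgf⟩ := exists_zeroLocus_eq_of_mem_orient hg
    exact ⟨f, Finset.mem_insert_of_mem hf, hgf⟩

lemma flatAt_insert_neg : flatAt L (insert (-h) G) y = flatAt L (insert h G) y := by
  ext z
  simp [mem_flatAt]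

lemma flatAt_inf_zeroLocus (hhy : h y = 0) :
    flatAt (L ⊓ zeroLocus h) G y = flatAt L (insert h G) y := by
  rw [flatAt, flatAt, Finset.filter_insert, if_pos hhy, flat_insert]

/-- The indicator of `HasProjDim`, in the form in which deletion-restriction is additive. -/
def projDimIndicator (k : ℕ) (x : V) (L : AffineSubspace ℝ V) (G : Finset (V →ᵃ[ℝ] ℝ)) : ℕ :=
  if HasProjDim k x L G then 1 else 0

lemma projDimIndicator_of_nonempty (hne : (openRegion L G).Nonempty) :
    projDimIndicator k x L G
      = if HasDim (flatAt L G (metricProj (closedRegion L G) x)) k then 1 else 0 := by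
  simp only [projDimIndicator, HasProjDim, hne, true_and]

lemma projDimIndicator_of_eq_empty (hempty : openRegion L G = ∅) :
    projDimIndicator k x L G = 0 :=
  if_neg fun hG => hG.1.ne_empty hempty

lemma forall_pos_or_forall_neg_of_ne_zero (hne : ∀ z ∈ openRegion L G, h z ≠ 0) :
    (∀ z ∈ openRegion L G, 0 < h z) ∨ ∀ z ∈ openRegion L G, h z < 0 := by
  by_contra! ⟨⟨a, ha, hha⟩, b, hb, hhb⟩
  obtain ⟨t, ht, h0⟩ := exists_lineMap_eq_zero h hha hhb
  exact hne _ (convex_openRegion.lineMap_mem ha hb ht) h0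

lemma regionCount_eq_zero (hf : f ∈ s) (hL : L ≤ zeroLocus f) : regionCount k x L s = 0 := by
  refine Finset.card_eq_zero.2 (Finset.filter_eq_empty_iff.2 ?_)
  rintro T - ⟨⟨p, hp⟩, -⟩
  obtain ⟨hpL, hps⟩ := mem_openRegion_orient.1 hp
  exact (hps f hf).1 (mem_zeroLocus.1 (hL hpL))

lemma whitneySum_insert (ha : a ∉ s) :
    whitneySum k L (insert a s) = whitneySum k L s - whitneySum k (L ⊓ zeroLocus a) s := by
  rw [whitneySum, sum_powerset_insert_neg_one_pow ha]
  simp only [flat_insert, mul_sub, Finset.sum_sub_distrib, whitneySum]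

lemma whitneySum_bot : whitneySum k (⊥ : AffineSubspace ℝ V) s = 0 := by
  simp [whitneySum, flat, HasDim]

lemma regionCount_empty :
    regionCount k x L ∅ = if HasDim L k then 1 else 0 := by
  have hflat (y : V) : flatAt L ∅ y = L := by rw [flatAt, Finset.filter_empty, flat_empty]
  have hiff : HasProjDim k x L ∅ ↔ HasDim L k := by
    rw [HasProjDim, hflat]
    exact and_iff_right_of_imp fun hL =>
      ((AffineSubspace.nonempty_iff_ne_bot L).2 hL.1).mono fun z hz => ⟨hz, by simp⟩
  rw [regionCount, Finset.card_filter]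
  simp [orient, hiff]

variable [FiniteDimensional ℝ V]

lemma isMetricProj_closedRegion (hne : (openRegion L G).Nonempty) (x : V) :
    IsMetricProj (closedRegion L G) x (metricProj (closedRegion L G) x) :=
  isMetricProj_metricProj (hne.mono openRegion_subset_closedRegion) isClosed_closedRegion
    convex_closedRegion x

lemma projDimIndicator_split_of_mem (hx : IsGeneric L (insert h G) x) (hL : ¬ L ≤ zeroLocus h)
    (hp : p ∈ openRegion L G) (hhp : h p = 0) :
    projDimIndicator k x L (insert h G) + projDimIndicator k x L (insert (-h) G)
      = projDimIndicator k x L G + projDimIndicator k x (L ⊓ zeroLocus h) G := by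
  have hcut : p ∈ openRegion (L ⊓ zeroLocus h) G :=
    openRegion_inf_zeroLocus.symm.subset ⟨hp, hhp⟩
  have hneg : (openRegion L (insert (-h) G)).Nonempty :=
    openRegion_insert_nonempty hp (by simpa using hhp) (by rwa [zeroLocus_neg])
  have hzero : h (metricProj (closedRegion (L ⊓ zeroLocus h) G) x) = 0 :=
    mem_zeroLocus.1 ((AffineSubspace.mem_inf_iff _ _ _).1
      (isMetricProj_closedRegion ⟨p, hcut⟩ x).1.1).2
  rw [projDimIndicator_of_nonempty (openRegion_insert_nonempty hp hhp hL),
    projDimIndicator_of_nonempty hneg, projDimIndicator_of_nonempty ⟨p, hp⟩,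
    projDimIndicator_of_nonempty ⟨p, hcut⟩, flatAt_insert_neg, flatAt_inf_zeroLocus hzero,
    ← hx.flatAt_insert (isMetricProj_closedRegion ⟨p, hp⟩ x), closedRegion_insert,
    closedRegion_insert_neg, closedRegion_inf_zeroLocus]
  exact metricProj_halves
    (fun q => if HasDim (flatAt L (insert h G) q) k then 1 else 0)
    isClosed_closedRegion convex_closedRegion h
    ⟨p, openRegion_subset_closedRegion hp, hhp⟩ x

lemma projDimIndicator_insert_of_pos (hx : IsGeneric L (insert h G) x)
    (hpos : ∀ z ∈ openRegion L G, 0 < h z) :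
    projDimIndicator k x L (insert h G) = projDimIndicator k x L G := by
  have hopen : openRegion L (insert h G) = openRegion L G := by
    rw [openRegion_insert]
    exact inter_eq_left.2 hpos
  rcases (openRegion L G).eq_empty_or_nonempty with hempty | hne
  · rw [projDimIndicator_of_eq_empty hempty, projDimIndicator_of_eq_empty (hopen.trans hempty)]
  · have hclosed : closedRegion L (insert h G) = closedRegion L G := by
      rw [← closure_openRegion hne, ← closure_openRegion (hopen.symm ▸ hne), hopen]
    rw [projDimIndicator_of_nonempty hne, projDimIndicator_of_nonempty (hopen.symm ▸ hne), hclosed,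
      hx.flatAt_insert (isMetricProj_closedRegion hne x)]

lemma projDimIndicator_split_of_pos (hx : IsGeneric L (insert h G) x)
    (hpos : ∀ z ∈ openRegion L G, 0 < h z) :
    projDimIndicator k x L (insert h G) + projDimIndicator k x L (insert (-h) G)
      = projDimIndicator k x L G + projDimIndicator k x (L ⊓ zeroLocus h) G := by
  have hneg : openRegion L (insert (-h) G) = ∅ := by
    rw [openRegion_insert]
    exact eq_empty_of_forall_notMem fun z hz => (hpos z hz.1).not_gt (neg_pos.1 hz.2)
  have hcut : openRegion (L ⊓ zeroLocus h) G = ∅ := by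
    rw [openRegion_inf_zeroLocus]
    exact eq_empty_of_forall_notMem fun z hz => (hpos z hz.1).ne' hz.2
  rw [projDimIndicator_insert_of_pos hx hpos, projDimIndicator_of_eq_empty hneg,
    projDimIndicator_of_eq_empty hcut]

lemma projDimIndicator_split (hx : IsGeneric L (insert h G) x) (hL : ¬ L ≤ zeroLocus h) :
    projDimIndicator k x L (insert h G) + projDimIndicator k x L (insert (-h) G)
      = projDimIndicator k x L G + projDimIndicator k x (L ⊓ zeroLocus h) G := by
  by_cases hmeets : ∃ p ∈ openRegion L G, h p = 0
  · obtain ⟨p, hp, hhp⟩ := hmeets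
    exact projDimIndicator_split_of_mem hx hL hp hhp
  · push Not at hmeets
    rcases forall_pos_or_forall_neg_of_ne_zero hmeets with hpos | hneg
    · exact projDimIndicator_split_of_pos hx hpos
    · have hsplit := projDimIndicator_split_of_pos (k := k) hx.insert_neg
        fun z hz => neg_pos.2 (hneg z hz)
      rwa [neg_neg, zeroLocus_neg, add_comm] at hsplit

lemma regionCount_insert (ha : a ∉ s) (hx : IsGeneric L (insert a s) x)
    (hL : ¬ L ≤ zeroLocus a) :
    regionCount k x L (insert a s) = regionCount k x L s + regionCount k x (L ⊓ zeroLocus a) s := by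
  simp only [regionCount, Finset.card_filter]
  change ∑ T ∈ (insert a s).powerset, projDimIndicator k x L (orient T (insert a s))
    = ∑ T ∈ s.powerset, projDimIndicator k x L (orient T s)
      + ∑ T ∈ s.powerset, projDimIndicator k x (L ⊓ zeroLocus a) (orient T s)
  rw [Finset.sum_powerset_insert ha, add_comm, ← Finset.sum_add_distrib,
    ← Finset.sum_add_distrib]
  refine Finset.sum_congr rfl fun T hT => ?_
  rw [orient_insert_of_subset ha (Finset.mem_powerset.1 hT), orient_insert_insert ha]
  exact projDimIndicator_split hx.insert_orient hL

theorem regionCount_eq_whitneySum (hx : IsGeneric L s x) :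
    (regionCount k x L s : ℤ)
      = (-1) ^ (Module.finrank ℝ L.direction + k) * whitneySum k L s := by
  induction s using Finset.induction_on generalizing L with
  | empty =>
    rw [regionCount_empty]
    simp only [whitneySum, Finset.powerset_empty, Finset.sum_singleton, flat_empty]
    split_ifs with hL
    · simp [hL.2, ← two_mul]
    · simp
  | insert a s ha ih =>
    by_cases hL : L ≤ zeroLocus a
    · rw [regionCount_eq_zero (Finset.mem_insert_self a s) hL, whitneySum_insert ha,
        inf_eq_left.2 hL, sub_self, mul_zero, Nat.cast_zero]
    have hdel := ih (hx.flat_left (Finset.empty_subset _) (Finset.subset_insert a s))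
    have hres := ih (hx.inf_zeroLocus (Finset.mem_insert_self a s) (Finset.subset_insert a s))
    rw [flat_empty] at hdel
    rw [regionCount_insert ha hx hL, whitneySum_insert ha, Nat.cast_add, hdel, hres]
    by_cases hcut : L ⊓ zeroLocus a = ⊥
    · simp [hcut, whitneySum_bot]
    · rw [finrank_direction_inf_zeroLocus hcut hL]
      ring

end DeletionRestriction

section Faces

lemma exists_forall_eq_inner_add (h : E d →ᵃ[ℝ] ℝ) : ∃ v c, ∀ z, h z = ⟪v, z⟫ + c := by
  refine ⟨(InnerProductSpace.toDual ℝ (E d)).symm h.linear.toContinuousLinearMap, h 0, fun z => ?_⟩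
  rw [InnerProductSpace.toDual_symm_apply]
  exact congrFun h.decomp z

lemma isFaceOf_of_nonneg {P : Set (E d)} (h : E d →ᵃ[ℝ] ℝ) (hP : ∀ z ∈ P, 0 ≤ h z) :
    IsFaceOf P {z | z ∈ P ∧ h z = 0} := by
  obtain ⟨v, c, hv⟩ := exists_forall_eq_inner_add h
  simp only [hv] at hP ⊢
  refine Or.inr ⟨-v, c, fun z hz => ?_, ?_⟩
  · rw [inner_neg_left]
    linarith [hP z hz]
  · simp only [inner_neg_left, neg_eq_iff_add_eq_zero]

lemma eventually_lineMap_mem_of_mem_intrinsicInterior {F : Set (E d)} {q z : E d}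
    (hq : q ∈ intrinsicInterior ℝ F) (hz : z ∈ F) :
    ∀ᶠ t in nhds (0 : ℝ), AffineMap.lineMap q z t ∈ F := by
  obtain ⟨q', hq', rfl⟩ := mem_intrinsicInterior.1 hq
  let γ : ℝ → affineSpan ℝ F := fun t =>
    ⟨AffineMap.lineMap (q' : E d) z t, AffineMap.lineMap_mem t q'.2 (subset_affineSpan ℝ F hz)⟩
  have hγ : Continuous γ := AffineMap.lineMap_continuous.subtype_mk _
  have hγ0 : γ 0 = q' := Subtype.ext (AffineMap.lineMap_apply_zero _ _)
  exact hγ.continuousAt.eventually (hγ0 ▸ mem_interior_iff_mem_nhds.1 hq')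

variable {L : AffineSubspace ℝ (E d)} {G : Finset (E d →ᵃ[ℝ] ℝ)} {F : Set (E d)} {q x y : E d}
  {k : ℕ}

lemma mem_closedRegion_flatAt {z : E d} : z ∈ closedRegion (flatAt L G y) G ↔
    z ∈ closedRegion L G ∧ ∀ f ∈ G, f y = 0 → f z = 0 := by
  simp only [closedRegion, mem_flatAt, mem_ofPred_eq]
  tauto

lemma closedRegion_flatAt_subset : closedRegion (flatAt L G y) G ⊆ closedRegion L G :=
  fun _ hz => (mem_closedRegion_flatAt.1 hz).1

lemma self_mem_closedRegion_flatAt (hy : y ∈ closedRegion L G) :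
    y ∈ closedRegion (flatAt L G y) G :=
  mem_closedRegion_flatAt.2 ⟨hy, fun _ _ => id⟩

lemma isFaceOf_closedRegion_flatAt :
    IsFaceOf (closedRegion L G) (closedRegion (flatAt L G y) G) := by
  have hsum (z : E d) : (∑ f ∈ G.filter (· y = 0), f) z = ∑ f ∈ G.filter (· y = 0), f z :=
    map_sum (AddMonoidHom.mk' (fun f : E d →ᵃ[ℝ] ℝ => f z) fun _ _ => rfl) _ _
  have hnonneg : ∀ z ∈ closedRegion L G, ∀ f ∈ G.filter (· y = 0), 0 ≤ f z := fun z hz f hf =>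
    hz.2 f (Finset.mem_filter.1 hf).1
  have hface := isFaceOf_of_nonneg (∑ f ∈ G.filter (· y = 0), f) fun z hz =>
    (Finset.sum_nonneg (hnonneg z hz)).trans_eq (hsum z).symm
  convert hface using 1
  ext z
  rw [mem_closedRegion_flatAt]
  refine and_congr_right fun hz => ?_
  rw [hsum, Finset.sum_eq_zero_iff_of_nonneg (hnonneg z hz)]
  simp only [Finset.mem_filter, and_imp]

lemma IsFaceOf.subset {P : Set (E d)} (hF : IsFaceOf P F) : F ⊆ P := by
  rcases hF with rfl | ⟨v, c, -, rfl⟩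
  · exact Subset.rfl
  · exact fun z hz => hz.1

lemma IsFaceOf.convex {P : Set (E d)} (hP : Convex ℝ P) (hF : IsFaceOf P F) : Convex ℝ F := by
  rcases hF with rfl | ⟨v, c, -, rfl⟩
  · exact hP
  · exact hP.inter ((convex_singleton c).affine_preimage (innerₗ (E d) v).toAffineMap)

lemma IsFaceOf.eq_closedRegion_flatAt (hF : IsFaceOf (closedRegion L G) F)
    (hq : q ∈ intrinsicInterior ℝ F) : F = closedRegion (flatAt L G q) G := by
  have hqF := intrinsicInterior_subset hq
  refine Subset.antisymm (fun z hz => mem_closedRegion_flatAt.2 ⟨hF.subset hz, fun f hf hfq => ?_⟩)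
    fun z hz => ?_
  · have hmax : (-f) z = (-f) q := by
      refine eq_of_eventually_lineMap_le (-f) ?_
      filter_upwards [eventually_lineMap_mem_of_mem_intrinsicInterior hq hz] with t ht
      rw [AffineMap.coe_neg, Pi.neg_apply, Pi.neg_apply, hfq]
      exact neg_le_neg ((hF.subset ht).2 f hf)
    simpa [hfq] using hmax
  · rcases hF with rfl | ⟨v, c, hc, rfl⟩
    · exact closedRegion_flatAt_subset hz
    · have hvz : ⟪v, z⟫ = ⟪v, q⟫ := eq_of_isMaxOn_closedRegion (h := (innerₗ (E d) v).toAffineMap)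
        (fun w hw => (hc w hw).trans_eq hqF.2.symm) hqF.1 hz.1
      exact ⟨closedRegion_flatAt_subset hz, hvz.trans hqF.2⟩

lemma IsFaceOf.exists_mem_intrinsicInterior (hF : IsFaceOf (closedRegion L G) F)
    (hne : F.Nonempty) : ∃ q ∈ closedRegion L G, q ∈ intrinsicInterior ℝ F ∧
      F = closedRegion (flatAt L G q) G := by
  obtain ⟨q, hq⟩ := hne.intrinsicInterior (hF.convex convex_closedRegion)
  exact ⟨q, hF.subset (intrinsicInterior_subset hq), hq, hF.eq_closedRegion_flatAt hq⟩

lemma sdim_closedRegion_flatAt (hy : y ∈ closedRegion L G) :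
    sdim (closedRegion (flatAt L G y) G) = Module.finrank ℝ (flatAt L G y).direction := by
  rw [sdim, affineSpan_closedRegion (self_mem_closedRegion_flatAt hy) flatAt_flatAt]

lemma hasDim_flatAt (hy : y ∈ L) :
    HasDim (flatAt L G y) k ↔ Module.finrank ℝ (flatAt L G y).direction = k :=
  and_iff_right ((AffineSubspace.nonempty_iff_ne_bot _).1 ⟨y, self_mem_flatAt hy⟩)

lemma mem_facesOfDim_closedRegion : F ∈ facesOfDim (closedRegion L G) k ↔
    ∃ q ∈ closedRegion L G, HasDim (flatAt L G q) k ∧ F = closedRegion (flatAt L G q) G := by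
  constructor
  · rintro ⟨hF, hne, hk⟩
    obtain ⟨q, hq, -, rfl⟩ := hF.exists_mem_intrinsicInterior hne
    exact ⟨q, hq, (hasDim_flatAt hq.1).2 ((sdim_closedRegion_flatAt hq).symm.trans hk), rfl⟩
  · rintro ⟨q, hq, hk, rfl⟩
    exact ⟨isFaceOf_closedRegion_flatAt, ⟨q, self_mem_closedRegion_flatAt hq⟩,
      (sdim_closedRegion_flatAt hq).trans hk.2⟩

lemma exists_isMetricProj_of_mem_add_normalCone (hq : q ∈ closedRegion L G)
    (hqF : q ∈ intrinsicInterior ℝ (closedRegion (flatAt L G q) G))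
    (hx : x ∈ closedRegion (flatAt L G q) G
      + normalCone (closedRegion L G) (closedRegion (flatAt L G q) G)) :
    ∃ y ∈ closedRegion (flatAt L G q) G, IsMetricProj (closedRegion L G) x y ∧
      x - y ∈ (flatAt L G q).directionᗮ := by
  obtain ⟨y, hy, n, hn, rfl⟩ := hx
  have hmax : IsMaxOn (⟪n, ·⟫) (closedRegion L G) q := fun z hz => by
    have hzq : z - q ∈ tangentConeOf (closedRegion L G) q := ⟨1, one_pos, by simpa using hz⟩
    exact sub_nonpos.1 ((inner_sub_right n z q).symm.trans_le (hn q hqF _ hzq))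
  have hperp := mem_orthogonal_direction_flatAt hmax hq
  have hyq : ⟪n, y⟫ = ⟪n, q⟫ :=
    eq_of_isMaxOn_closedRegion (h := (innerₗ (E d) n).toAffineMap) hmax hq hy.1
  refine ⟨y, hy, ⟨closedRegion_flatAt_subset hy, fun z hz => ?_⟩, by rwa [add_sub_cancel_left]⟩
  rw [add_sub_cancel_left, inner_sub_right, hyq]
  exact sub_nonpos.2 (hmax hz)

lemma IsMetricProj.mem_add_normalCone (hy : IsMetricProj (closedRegion L G) x y) :
    x ∈ closedRegion (flatAt L G y) G
      + normalCone (closedRegion L G) (closedRegion (flatAt L G y) G) := by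
  refine ⟨y, self_mem_closedRegion_flatAt hy.1, x - y, ?_, add_sub_cancel _ _⟩
  rintro q hq u ⟨δ, hδ, hu⟩
  have hqy : ⟪x - y, q - y⟫ = 0 :=
    Submodule.inner_left_of_mem_orthogonal (AffineSubspace.vsub_mem_direction
      (intrinsicInterior_subset hq).1 (self_mem_flatAt hy.1.1)) hy.sub_mem_orthogonal
  have h := hy.2 _ hu
  rw [add_sub_right_comm, inner_add_right, hqy, zero_add, inner_smul_right] at h
  exact nonpos_of_mul_nonpos_right h hδ

lemma IsGeneric.flatAt_eq (hx : IsGeneric L G x) (hy : y ∈ flatAt L G q)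
    (hperp : x - y ∈ (flatAt L G q).directionᗮ) : flatAt L G y = flatAt L G q := by
  have hyG := (mem_flatAt.1 hy).2
  refine le_antisymm (fun z hz => ?_) fun z hz => mem_flatAt.2 ⟨(mem_flatAt.1 hz).1, fun f hf hfy =>
    mem_zeroLocus.1 (hx _ (Finset.filter_subset _ _) f hf y hy hperp hfy hz)⟩
  obtain ⟨hzL, hzG⟩ := mem_flatAt.1 hz
  exact mem_flatAt.2 ⟨hzL, fun f hf hfq => hzG f hf (hyG f hf hfq)⟩

/-- The face of `closedRegion L G` whose relative interior contains the metric projection of `x`. -/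
def projFace (x : E d) (L : AffineSubspace ℝ (E d)) (G : Finset (E d →ᵃ[ℝ] ℝ)) : Set (E d) :=
  closedRegion (flatAt L G (metricProj (closedRegion L G) x)) G

lemma IsGeneric.mem_face_add_normalCone_iff (hx : IsGeneric L G x)
    (hne : (openRegion L G).Nonempty) :
    F ∈ facesOfDim (closedRegion L G) k ∧ x ∈ F + normalCone (closedRegion L G) F ↔
      HasProjDim k x L G ∧ F = projFace x L G := by
  have hproj := isMetricProj_closedRegion hne x
  constructor
  · rintro ⟨⟨hF, hFne, hk⟩, hxF⟩
    obtain ⟨q, hq, hqF, rfl⟩ := hF.exists_mem_intrinsicInterior hFne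
    obtain ⟨y, hy, hyproj, hperp⟩ := exists_isMetricProj_of_mem_add_normalCone hq hqF hxF
    have hflat : flatAt L G (metricProj (closedRegion L G) x) = flatAt L G q := by
      rw [hyproj.metricProj_eq, hx.flatAt_eq hy.1 hperp]
    refine ⟨⟨hne, ?_⟩, by rw [projFace, hflat]⟩
    rw [hflat, hasDim_flatAt hq.1, ← sdim_closedRegion_flatAt hq, hk]
  · rintro ⟨⟨-, hk⟩, rfl⟩
    exact ⟨mem_facesOfDim_closedRegion.2 ⟨_, hproj.1, hk, rfl⟩, hproj.mem_add_normalCone⟩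

end Faces

section Levels

variable {V : Type*} [NormedAddCommGroup V] [InnerProductSpace ℝ V]

/-- The functionals of `s` whose zero sets do not contain `M`: they cut out in `M` the restriction
to `M` of the arrangement `s`, up to empty intersections. -/
def crossing (s : Finset (V →ᵃ[ℝ] ℝ)) (M : AffineSubspace ℝ V) : Finset (V →ᵃ[ℝ] ℝ) :=
  s.filter (¬ M ≤ zeroLocus ·)

/-- The `j`-dimensional flats of the arrangement `s`. -/
def flatsOfDim (s : Finset (V →ᵃ[ℝ] ℝ)) (j : ℕ) : Finset (AffineSubspace ℝ V) :=
  (s.powerset.image (flat ⊤)).filter (HasDim · j)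

variable {L M : AffineSubspace ℝ V} {s T T' : Finset (V →ᵃ[ℝ] ℝ)} {q x : V} {j : ℕ}

lemma mem_flatsOfDim : M ∈ flatsOfDim s j ↔ (∃ B ⊆ s, flat ⊤ B = M) ∧ HasDim M j := by
  simp only [flatsOfDim, Finset.mem_filter, Finset.mem_image, Finset.mem_powerset]

lemma crossing_subset : crossing s M ⊆ s :=
  Finset.filter_subset _ _

lemma ne_zero_of_mem_crossing_flatAt {f : V →ᵃ[ℝ] ℝ} (hf : f ∈ crossing s (flatAt L s q)) :
    f q ≠ 0 := by
  obtain ⟨hfs, hle⟩ := Finset.mem_filter.1 hf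
  exact fun h0 => hle fun z hz => mem_zeroLocus.2 ((mem_flatAt.1 hz).2 f hfs h0)

lemma closedRegion_orient_crossing :
    closedRegion M (orient T (crossing s M)) = closedRegion M (orient T s) := by
  ext z
  simp only [closedRegion, orient, Finset.forall_mem_image, mem_ofPred_eq]
  refine and_congr_right fun hz => ⟨fun h f hf => ?_, fun h f hf => h (crossing_subset hf)⟩
  by_cases hMf : M ≤ zeroLocus f
  · have hfz : f z = 0 := mem_zeroLocus.1 (hMf hz)
    split_ifs <;> simp [hfz]
  · exact h (Finset.mem_filter.2 ⟨hf, hMf⟩)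

lemma orient_inter_left : orient (T ∩ s) s = orient T s :=
  Finset.image_congr fun f (hf : f ∈ s) => by simp only [Finset.mem_inter, hf, and_true]

lemma flatAt_orient : flatAt L (orient T s) q = flatAt L s q := by
  ext z
  simp only [mem_flatAt, orient, Finset.forall_mem_image]
  refine and_congr_right fun _ => forall₂_congr fun f _ => ?_
  split_ifs <;> simp

lemma exists_eq_zero_of_mem_orient {g : V →ᵃ[ℝ] ℝ} (hg : g ∈ orient T s) (hgq : g q = 0) :
    ∃ f ∈ s, f q = 0 := by
  obtain ⟨f, hf, hgf⟩ := exists_zeroLocus_eq_of_mem_orient hg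
  exact ⟨f, hf, mem_zeroLocus.1 (hgf ▸ mem_zeroLocus.2 hgq)⟩

lemma IsGeneric.orient (hx : IsGeneric L s x) : IsGeneric L (orient T s) x :=
  hx.of_zeroLocus fun _ => exists_zeroLocus_eq_of_mem_orient

lemma orient_eq_of_mem_openRegion {L' : AffineSubspace ℝ V} (hq : q ∈ openRegion L (orient T s))
    (hq' : q ∈ openRegion L' (orient T' s)) : orient T s = orient T' s :=
  Finset.image_congr fun f hf => by
    simp only [((mem_openRegion_orient.1 hq).2 f hf).2, ((mem_openRegion_orient.1 hq').2 f hf).2]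

lemma exists_mem_openRegion_orient (hq : q ∈ L) (hs : ∀ f ∈ s, f q ≠ 0) :
    ∃ T ⊆ s, q ∈ openRegion L (orient T s) :=
  ⟨s.filter (0 < · q), Finset.filter_subset _ _, mem_openRegion_orient.2
    ⟨hq, fun f hf => ⟨hs f hf, by simp only [Finset.mem_filter, hf, true_and]⟩⟩⟩

lemma mem_openRegion_orient_of_forall_ne_zero (hq : q ∈ closedRegion L (orient T s))
    (hs : ∀ f ∈ s, f q ≠ 0) : q ∈ openRegion L (orient T s) :=
  mem_openRegion_iff.2 ⟨hq, fun _ hg hgq =>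
    let ⟨f, hf, hfq⟩ := exists_eq_zero_of_mem_orient hg hgq
    hs f hf hfq⟩

lemma mem_openRegion_crossing_flatAt (hq : q ∈ closedRegion L (orient T s)) :
    q ∈ openRegion (flatAt L s q) (orient T (crossing s (flatAt L s q))) := by
  refine mem_openRegion_orient_of_forall_ne_zero ?_ fun f hf => ne_zero_of_mem_crossing_flatAt hf
  rw [closedRegion_orient_crossing]
  exact ⟨self_mem_flatAt hq.1, hq.2⟩

lemma eq_of_closedRegion_orient_eq (hT : T ⊆ s) (hT' : T' ⊆ s)
    (hne : (openRegion L (orient T s)).Nonempty)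
    (heq : closedRegion L (orient T s) = closedRegion L (orient T' s)) : T = T' := by
  obtain ⟨p, hp⟩ := hne
  have hpT := (mem_openRegion_orient.1 hp).2
  have hp' : p ∈ openRegion L (orient T' s) := mem_openRegion_orient_of_forall_ne_zero
    (heq ▸ openRegion_subset_closedRegion hp) fun f hf => (hpT f hf).1
  have hpT' := (mem_openRegion_orient.1 hp').2
  exact Finset.Subset.antisymm
    (fun f hf => (hpT' f (hT hf)).2.2 ((hpT f (hT hf)).2.1 hf))
    (fun f hf => (hpT f (hT' hf)).2.2 ((hpT' f (hT' hf)).2.1 hf))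

lemma flatAt_mem_flatsOfDim (hdim : HasDim (flatAt ⊤ s q) j) : flatAt ⊤ s q ∈ flatsOfDim s j :=
  mem_flatsOfDim.2 ⟨⟨_, Finset.filter_subset _ _, rfl⟩, hdim⟩

lemma IsGeneric.crossing (hx : IsGeneric ⊤ s x) (hM : M ∈ flatsOfDim s j) :
    IsGeneric M (crossing s M) x := by
  obtain ⟨⟨B, hB, rfl⟩, -⟩ := mem_flatsOfDim.1 hM
  exact hx.flat_left hB crossing_subset

lemma flatAt_eq_of_mem_openRegion_crossing (hM : M ∈ flatsOfDim s j)
    (hq : q ∈ openRegion M (orient T (crossing s M))) : flatAt ⊤ s q = M := by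
  obtain ⟨⟨B, hB, rfl⟩, -⟩ := mem_flatsOfDim.1 hM
  refine le_antisymm (fun z hz => ?_) fun z hz => mem_flatAt.2 ⟨trivial, fun f hf hfq => ?_⟩
  · exact mem_flat.2 ⟨trivial, fun f hf => (mem_flatAt.1 hz).2 f (hB hf) ((mem_flat.1 hq.1).2 f hf)⟩
  · by_contra hfz
    have hf' : f ∈ crossing s (flat ⊤ B) :=
      Finset.mem_filter.2 ⟨hf, fun hle => hfz (mem_zeroLocus.1 (hle hz))⟩
    exact ((mem_openRegion_orient.1 hq).2 f hf').1 hfq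

end Levels

section Chambers

/-- The arrangement of the zero sets of the functionals in `s`. -/
def zeroSets (s : Finset (E d →ᵃ[ℝ] ℝ)) : Finset (Set (E d)) :=
  s.image fun f => (zeroLocus f : Set (E d))

variable {s T : Finset (E d →ᵃ[ℝ] ℝ)} {p q : E d} {P Q : Set (E d)} {j : ℕ}

lemma exists_linear_ne_zero_of_isHyperplane {H : Set (E d)} (hH : IsHyperplane H) :
    ∃ f : E d →ᵃ[ℝ] ℝ, f.linear ≠ 0 ∧ (zeroLocus f : Set (E d)) = H := by
  obtain ⟨v, c, hv, rfl⟩ := hH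
  refine ⟨(innerₗ (E d) v).toAffineMap - AffineMap.const ℝ _ c, fun h => hv ?_, ?_⟩
  · simpa using congrArg (· v) h
  · ext z
    simp [sub_eq_zero]

lemma exists_eq_zeroSets {A : Finset (Set (E d))} (hA : ∀ H ∈ A, IsHyperplane H) :
    ∃ s : Finset (E d →ᵃ[ℝ] ℝ), (∀ f ∈ s, f.linear ≠ 0) ∧ A = zeroSets s := by
  choose! φ hφ hφA using fun H hH => exists_linear_ne_zero_of_isHyperplane (hA H hH)
  refine ⟨A.image φ, Finset.forall_mem_image.2 hφ, ?_⟩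
  rw [zeroSets, Finset.image_image]
  exact (Finset.image_id.symm.trans (Finset.image_congr fun H hH => (hφA H hH).symm))

lemma mem_compl_iUnion_zeroSets : q ∈ (⋃ H ∈ zeroSets s, H)ᶜ ↔ ∀ f ∈ s, f q ≠ 0 := by
  simp [zeroSets]

lemma openRegion_orient_subset_compl :
    openRegion ⊤ (orient T s) ⊆ (⋃ H ∈ zeroSets s, H)ᶜ := fun _ hz =>
  mem_compl_iUnion_zeroSets.2 fun f hf => ((mem_openRegion_orient.1 hz).2 f hf).1

lemma connectedComponentIn_compl_zeroSets (hp : p ∈ openRegion ⊤ (orient T s)) :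
    connectedComponentIn (⋃ H ∈ zeroSets s, H)ᶜ p = openRegion ⊤ (orient T s) := by
  refine Subset.antisymm (fun z hz => ⟨trivial, fun g hg => ?_⟩)
    (convex_openRegion.isPreconnected.subset_connectedComponentIn hp
      openRegion_orient_subset_compl)
  by_contra! hgz
  obtain ⟨w, hw, hgw⟩ := isPreconnected_connectedComponentIn.intermediate_value hz
    (mem_connectedComponentIn (openRegion_orient_subset_compl hp))
    g.continuous_of_finiteDimensional.continuousOn ⟨hgz, (hp.2 g hg).le⟩
  obtain ⟨f, hf, hfw⟩ := exists_eq_zero_of_mem_orient hg hgw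
  exact mem_compl_iUnion_zeroSets.1 (connectedComponentIn_subset _ _ hw) f hf hfw

lemma isChamber_zeroSets : IsChamber (zeroSets s) Q ↔
    ∃ T ⊆ s, (openRegion ⊤ (orient T s)).Nonempty ∧ Q = closedRegion ⊤ (orient T s) := by
  constructor
  · rintro ⟨p, hp, rfl⟩
    obtain ⟨T, hT, hpT⟩ := exists_mem_openRegion_orient (L := ⊤) trivial
      (mem_compl_iUnion_zeroSets.1 hp)
    exact ⟨T, hT, ⟨p, hpT⟩, by
      rw [connectedComponentIn_compl_zeroSets hpT, closure_openRegion ⟨p, hpT⟩]⟩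
  · rintro ⟨T, -, ⟨p, hp⟩, rfl⟩
    exact ⟨p, openRegion_orient_subset_compl hp, by
      rw [connectedComponentIn_compl_zeroSets hp, closure_openRegion ⟨p, hp⟩]⟩

lemma dense_compl_zeroSets (hs : ∀ f ∈ s, f.linear ≠ 0) : Dense (⋃ H ∈ zeroSets s, H)ᶜ := by
  suffices h : ∀ᵐ z : E d, ∀ f ∈ s, f z ≠ 0 from
    MeasureTheory.Measure.dense_of_ae (h.mono fun _ => mem_compl_iUnion_zeroSets.2)
  refine (Filter.eventually_all_finset s).2 fun f hf => ?_
  have hne : zeroLocus f ≠ ⊤ := fun h => hs f hf <| LinearMap.ext fun v => by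
    have hzero (z : E d) : f z = 0 := mem_zeroLocus.1 (h ▸ trivial)
    simpa [hzero] using f.linearMap_vsub v 0
  filter_upwards [MeasureTheory.compl_mem_ae_iff.2
    (MeasureTheory.Measure.addHaar_affineSubspace MeasureTheory.volume _ hne)] with z hz
  exact fun h0 => hz (mem_zeroLocus.2 h0)

lemma exists_mem_closedRegion_orient (hs : ∀ f ∈ s, f.linear ≠ 0) (q : E d) :
    ∃ T ⊆ s, (openRegion ⊤ (orient T s)).Nonempty ∧ q ∈ closedRegion ⊤ (orient T s) := by
  have hcover : (⋃ H ∈ zeroSets s, H)ᶜ ⊆ ⋃ T ∈ s.powerset, openRegion ⊤ (orient T s) := by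
    intro z hz
    obtain ⟨T, hT, hzT⟩ := exists_mem_openRegion_orient (L := ⊤) trivial
      (mem_compl_iUnion_zeroSets.1 hz)
    exact mem_iUnion₂.2 ⟨T, Finset.mem_powerset.2 hT, hzT⟩
  have hq := closure_mono hcover (dense_compl_zeroSets hs q)
  rw [Finset.closure_biUnion] at hq
  obtain ⟨T, hT, hqT⟩ := mem_iUnion₂.1 hq
  have hne := closure_nonempty_iff.1 ⟨q, hqT⟩
  exact ⟨T, Finset.mem_powerset.1 hT, hne, closure_openRegion hne ▸ hqT⟩

lemma exists_isChamber_mem_facesOfDim_iff (hs : ∀ f ∈ s, f.linear ≠ 0) :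
    (∃ Q, IsChamber (zeroSets s) Q ∧ P ∈ facesOfDim Q j) ↔
      ∃ M ∈ flatsOfDim s j, ∃ T ⊆ crossing s M,
        (openRegion M (orient T (crossing s M))).Nonempty ∧
          P = closedRegion M (orient T (crossing s M)) := by
  constructor
  · rintro ⟨Q, hQ, hP⟩
    obtain ⟨T, -, -, rfl⟩ := isChamber_zeroSets.1 hQ
    obtain ⟨q, hq, hdim, rfl⟩ := mem_facesOfDim_closedRegion.1 hP
    rw [flatAt_orient] at hdim ⊢
    refine ⟨_, flatAt_mem_flatsOfDim hdim, T ∩ crossing s (flatAt ⊤ s q),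
      Finset.inter_subset_right, ?_⟩
    rw [orient_inter_left, closedRegion_orient_crossing]
    exact ⟨⟨q, mem_openRegion_crossing_flatAt hq⟩, rfl⟩
  · rintro ⟨M, hM, T', -, ⟨q, hq⟩, rfl⟩
    obtain ⟨T, hT, hne, hqT⟩ := exists_mem_closedRegion_orient hs q
    refine ⟨_, isChamber_zeroSets.2 ⟨T, hT, hne, rfl⟩,
      mem_facesOfDim_closedRegion.2 ⟨q, hqT, ?_⟩⟩
    have hq' := mem_openRegion_crossing_flatAt hqT
    rw [flatAt_orient, flatAt_eq_of_mem_openRegion_crossing hM hq]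
    rw [flatAt_eq_of_mem_openRegion_crossing hM hq] at hq'
    rw [orient_eq_of_mem_openRegion hq hq', closedRegion_orient_crossing]
    exact ⟨(mem_flatsOfDim.1 hM).2, rfl⟩

end Chambers

section Coefficients

variable {M : AffineSubspace ℝ (E d)} {B s : Finset (E d →ᵃ[ℝ] ℝ)} {j k : ℕ}

lemma hasDim_iff : HasDim M k ↔ (M : Set (E d)).Nonempty ∧ sdim (M : Set (E d)) = k := by
  rw [HasDim, sdim, AffineSubspace.affineSpan_coe, AffineSubspace.nonempty_iff_ne_bot]

lemma interSet_zeroSets : interSet (zeroSets B) = flat ⊤ B := by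
  ext z
  simp [interSet, zeroSets, mem_flat]

lemma levels_zeroSets : levels (zeroSets s) j = (flatsOfDim s j).image (↑) := by
  have himage : (zeroSets s).powerset.image interSet
      = (s.powerset.image (flat ⊤)).image ((↑) : AffineSubspace ℝ (E d) → Set (E d)) := by
    rw [zeroSets, Finset.powerset_image, Finset.image_image, Finset.image_image]
    exact Finset.image_congr fun B _ => interSet_zeroSets
  rw [levels, himage, Finset.filter_image, flatsOfDim]
  simp only [hasDim_iff]

lemma interSet_image_inter :
    interSet (B.image fun f => (zeroLocus f : Set (E d)) ∩ M) ∩ M = flat M B := by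
  ext z
  simp only [interSet, Finset.mem_image, iInter_exists, biInter_and', iInter_iInter_eq_right,
    mem_inter_iff, mem_iInter, SetLike.mem_coe, mem_zeroLocus, mem_flat]
  exact ⟨fun h => ⟨h.2, fun f hf => (h.1 f hf).1⟩, fun h => ⟨fun f hf => ⟨h.2 f hf, h.1⟩, h.1⟩⟩

lemma restrict_zeroSets : restrict (zeroSets s) (M : Set (E d))
    = ((crossing s M).image fun f => (zeroLocus f : Set (E d)) ∩ M).filter (·.Nonempty) := by
  ext K
  simp only [_root_.restrict, zeroSets, Finset.image_image, crossing, Finset.mem_filter,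
    Finset.mem_image, Function.comp_apply]
  constructor
  · rintro ⟨⟨f, hf, rfl⟩, hne, hM⟩
    exact ⟨⟨f, ⟨hf, fun h => hM (inter_eq_right.2 h)⟩, rfl⟩, hne⟩
  · rintro ⟨⟨f, ⟨hf, hM⟩, rfl⟩, hne⟩
    exact ⟨⟨f, hf, rfl⟩, hne, fun h => hM (inter_eq_right.1 h)⟩

lemma charCoeffIn_restrict_zeroSets : charCoeffIn (M : Set (E d)) (restrict (zeroSets s) M) j k
    = (-1) ^ (j - k) * whitneySum k M (crossing s M) := by
  let dimIndicator (B : Finset (Set (E d))) : ℤ :=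
    if (interSet B ∩ M).Nonempty ∧ sdim (interSet B ∩ M) = k then 1 else 0
  have hwhitney : whitneySum k M (crossing s M)
      = ∑ B ∈ ((crossing s M).image fun f => (zeroLocus f : Set (E d)) ∩ M).powerset,
          (-1) ^ B.card * dimIndicator B := by
    refine Eq.trans ?_ (sum_powerset_neg_one_pow_image _ _ dimIndicator)
    simp only [whitneySum, dimIndicator, interSet_image_inter, hasDim_iff]
  have hempty : ∀ B, ∅ ∈ B → dimIndicator B = 0 := fun B hB => if_neg fun h => by
    obtain ⟨z, hz, -⟩ := h.1
    exact mem_iInter₂.1 hz ∅ hB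
  rw [charCoeffIn, hwhitney, restrict_zeroSets]
  congr 1
  refine (Finset.sum_congr rfl fun B _ => ?_).trans
    (Finset.sum_subset (Finset.powerset_mono.2 (Finset.filter_subset _ _)) fun B hB hB' => ?_)
  · simp only [dimIndicator, mul_ite, mul_one, mul_zero]
  · rw [hempty B, mul_zero]
    by_contra h
    refine hB' (Finset.mem_powerset.2 fun K hK => Finset.mem_filter.2
      ⟨Finset.mem_powerset.1 hB hK, nonempty_iff_ne_empty.2 ?_⟩)
    exact fun hK0 => h (hK0 ▸ hK)

lemma levelCharCoeff_zeroSets : levelCharCoeff (zeroSets s) j k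
    = ∑ M ∈ flatsOfDim s j, (-1) ^ (j - k) * whitneySum k M (crossing s M) := by
  rw [levelCharCoeff, levels_zeroSets, Finset.sum_image SetLike.coe_injective.injOn]
  exact Finset.sum_congr rfl fun M _ => charCoeffIn_restrict_zeroSets

end Coefficients

section GenericHyperplanes

lemma exists_eq_of_sub_mem_orthogonal {V : Type*} [NormedAddCommGroup V] [InnerProductSpace ℝ V]
    {M : AffineSubspace ℝ V} [M.direction.HasOrthogonalProjection] {f : V →ᵃ[ℝ] ℝ}
    (hM : ¬ M ≤ zeroLocus f) : ∃ g : V →ᵃ[ℝ] ℝ, g ≠ 0 ∧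
      ∀ x, ∀ y ∈ M, x - y ∈ M.directionᗮ → g x = f y := by
  obtain ⟨w, hwM, hw⟩ := SetLike.not_le_iff_exists.1 hM
  have : Nonempty M := ⟨⟨w, hwM⟩⟩
  let g := f.comp (M.subtype.comp (EuclideanGeometry.orthogonalProjection M).toAffineMap)
  have hg : ∀ x, ∀ y ∈ M, x - y ∈ M.directionᗮ → g x = f y := by
    intro x y hy hxy
    have hproj : (EuclideanGeometry.orthogonalProjection M x : V) = y :=
      EuclideanGeometry.coe_orthogonalProjection_eq_iff_mem.2 ⟨hy, hxy⟩
    exact congrArg f hproj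
  refine ⟨g, fun h0 => hw (mem_zeroLocus.2 ?_), hg⟩
  rw [← hg w w hwM (by simp), h0, AffineMap.coe_zero, Pi.zero_apply]

variable {s : Finset (E d →ᵃ[ℝ] ℝ)}

lemma isHyperplane_zeroLocus {f : E d →ᵃ[ℝ] ℝ} (hf : f.linear ≠ 0) :
    IsHyperplane (zeroLocus f : Set (E d)) := by
  obtain ⟨v, c, hv⟩ := exists_forall_eq_inner_add f
  refine ⟨v, -c, ?_, ?_⟩
  · rintro rfl
    refine hf (LinearMap.ext fun w => ?_)
    simpa [hv] using f.linearMap_vsub w 0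
  · ext z
    simp [hv, eq_neg_iff_add_eq_zero]

lemma exists_hyperplanes_forall_ne_zero (hs : ∀ g ∈ s, g ≠ 0) :
    ∃ (m : ℕ) (Hs : Fin m → Set (E d)), (∀ i, IsHyperplane (Hs i)) ∧
      ∀ x ∉ ⋃ i, Hs i, ∀ g ∈ s, g x ≠ 0 := by
  let s' := s.filter (·.linear ≠ 0)
  refine ⟨s'.card, fun i => zeroLocus (s'.equivFin.symm i).1, fun i =>
    isHyperplane_zeroLocus (Finset.mem_filter.1 (s'.equivFin.symm i).2).2, fun x hx g hg h0 => ?_⟩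
  by_cases hlin : g.linear = 0
  · obtain ⟨c, rfl⟩ := (AffineMap.linear_eq_zero_iff_exists_const g).1 hlin
    exact hs _ hg (AffineMap.ext fun _ => h0)
  · refine hx (mem_iUnion.2 ⟨s'.equivFin ⟨g, Finset.mem_filter.2 ⟨hg, hlin⟩⟩, ?_⟩)
    simpa using h0

lemma exists_forall_ne_zero_isGeneric {V : Type*} [NormedAddCommGroup V] [InnerProductSpace ℝ V]
    [FiniteDimensional ℝ V] (L : AffineSubspace ℝ V) (G : Finset (V →ᵃ[ℝ] ℝ)) :
    ∃ S : Finset (V →ᵃ[ℝ] ℝ), (∀ g ∈ S, g ≠ 0) ∧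
      ∀ x, (∀ g ∈ S, g x ≠ 0) → IsGeneric L G x := by
  let badPairs := (G.powerset ×ˢ G).filter fun q => ¬ flat L q.1 ≤ zeroLocus q.2
  have hpull : ∀ q ∈ badPairs, ∃ g : V →ᵃ[ℝ] ℝ, g ≠ 0 ∧
      ∀ x, ∀ y ∈ flat L q.1, x - y ∈ (flat L q.1).directionᗮ → g x = q.2 y := fun q hq =>
    exists_eq_of_sub_mem_orthogonal (Finset.mem_filter.1 hq).2
  choose! g hg0 hg using hpull
  refine ⟨badPairs.image g, Finset.forall_mem_image.2 hg0, fun x hx B hB f hf y hy hperp hfy => ?_⟩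
  by_contra hle
  have hq : (B, f) ∈ badPairs := Finset.mem_filter.2
    ⟨Finset.mk_mem_product (Finset.mem_powerset.2 hB) hf, hle⟩
  exact hx _ (Finset.mem_image_of_mem g hq) ((hg _ hq x y hy hperp).trans hfy)

lemma exists_hyperplanes_isGeneric (L : AffineSubspace ℝ (E d)) (G : Finset (E d →ᵃ[ℝ] ℝ)) :
    ∃ (m : ℕ) (Hs : Fin m → Set (E d)), (∀ i, IsHyperplane (Hs i)) ∧
      ∀ x ∉ ⋃ i, Hs i, IsGeneric L G x := by
  obtain ⟨S, hS, hgeneric⟩ := exists_forall_ne_zero_isGeneric L G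
  obtain ⟨m, Hs, hHs, havoid⟩ := exists_hyperplanes_forall_ne_zero hS
  exact ⟨m, Hs, hHs, fun x hx => hgeneric x (havoid x hx)⟩

end GenericHyperplanes

section Counting

section ProjRegions

variable {V : Type*} [NormedAddCommGroup V] [InnerProductSpace ℝ V]

/-- Indexes the `j`-faces `P` of the chambers of `s` such that `x` projects into the relative
interior of a `k`-face of `P`: the pair `(M, T)` stands for the region of the flat `M` with signs
`T` relative to the hyperplanes crossing `M`. -/
def projRegions (x : V) (s : Finset (V →ᵃ[ℝ] ℝ)) (j k : ℕ) :
    Finset ((_ : AffineSubspace ℝ V) × Finset (V →ᵃ[ℝ] ℝ)) :=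
  (flatsOfDim s j).sigma fun M =>
    (crossing s M).powerset.filter fun T => HasProjDim k x M (orient T (crossing s M))

variable {s T : Finset (V →ᵃ[ℝ] ℝ)} {M : AffineSubspace ℝ V} {x : V} {j k : ℕ}

lemma mem_projRegions : ⟨M, T⟩ ∈ projRegions x s j k ↔
    M ∈ flatsOfDim s j ∧ T ⊆ crossing s M ∧ HasProjDim k x M (orient T (crossing s M)) := by
  simp only [projRegions, Finset.mem_sigma, Finset.mem_filter, Finset.mem_powerset]

lemma card_projRegions :
    (projRegions x s j k).card = ∑ M ∈ flatsOfDim s j, regionCount k x M (crossing s M) :=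
  Finset.card_sigma _ _

lemma injOn_projRegions : Set.InjOn (fun r : (_ : AffineSubspace ℝ V) × Finset (V →ᵃ[ℝ] ℝ) =>
    closedRegion r.1 (orient r.2 (crossing s r.1))) (projRegions x s j k) := by
  rintro ⟨M, T⟩ hr ⟨M', T'⟩ hr' heq
  obtain ⟨-, hT, hne, -⟩ := mem_projRegions.1 hr
  obtain ⟨-, hT', hne', -⟩ := mem_projRegions.1 hr'
  dsimp only at heq
  obtain rfl : M = M' := by
    rw [← affineSpan_closedRegion_of_nonempty hne, heq, affineSpan_closedRegion_of_nonempty hne']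
  rw [eq_of_closedRegion_orient_eq hT hT' hne heq]

end ProjRegions

variable {s : Finset (E d →ᵃ[ℝ] ℝ)} {x : E d} {j k : ℕ}

lemma setOf_face_mem_add_normalCone_eq_image_projRegions (hs : ∀ f ∈ s, f.linear ≠ 0)
    (hx : IsGeneric ⊤ s x) :
    {q : Set (E d) × Set (E d) | (∃ Q, IsChamber (zeroSets s) Q ∧ q.1 ∈ facesOfDim Q j) ∧
        q.2 ∈ facesOfDim q.1 k ∧ x ∈ q.2 + normalCone q.1 q.2}
      = (fun r : (_ : AffineSubspace ℝ (E d)) × Finset (E d →ᵃ[ℝ] ℝ) =>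
          (closedRegion r.1 (orient r.2 (crossing s r.1)),
            projFace x r.1 (orient r.2 (crossing s r.1)))) '' projRegions x s j k := by
  ext ⟨P, F⟩
  simp only [mem_ofPred_eq, exists_isChamber_mem_facesOfDim_iff hs, mem_image, SetLike.mem_coe,
    Sigma.exists, mem_projRegions, Prod.mk.injEq]
  constructor
  · rintro ⟨⟨M, hM, T, hT, hne, rfl⟩, hF⟩
    obtain ⟨hdim, rfl⟩ := ((hx.crossing hM).orient.mem_face_add_normalCone_iff hne).1 hF
    exact ⟨M, T, ⟨hM, hT, hdim⟩, rfl, rfl⟩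
  · rintro ⟨M, T, ⟨hM, hT, hdim⟩, rfl, rfl⟩
    exact ⟨⟨M, hM, T, hT, hdim.1, rfl⟩,
      ((hx.crossing hM).orient.mem_face_add_normalCone_iff hdim.1).2 ⟨hdim, rfl⟩⟩

lemma ncard_face_mem_add_normalCone (hs : ∀ f ∈ s, f.linear ≠ 0) (hx : IsGeneric ⊤ s x) :
    Set.ncard {q : Set (E d) × Set (E d) |
        (∃ Q, IsChamber (zeroSets s) Q ∧ q.1 ∈ facesOfDim Q j) ∧
        q.2 ∈ facesOfDim q.1 k ∧ x ∈ q.2 + normalCone q.1 q.2}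
      = ∑ M ∈ flatsOfDim s j, regionCount k x M (crossing s M) := by
  rw [setOf_face_mem_add_normalCone_eq_image_projRegions hs hx, Set.InjOn.ncard_image,
    Set.ncard_coe_finset, card_projRegions]
  exact fun r hr r' hr' h => injOn_projRegions hr hr' (congrArg Prod.fst h)

end Counting

/-- `j`-th level main theorem: for generic `x`,
`Σ_{P ∈ R_j(A)} Σ_{F ∈ F_k(P)} 1_{F + N_F(P)}(x) = a_{kj}`. -/
theorem stmt19 {d : ℕ} (A : Finset (Set (E d)))
    (hA : ∀ H ∈ A, IsHyperplane H) (j k : ℕ) (hj : j ≤ d) (hk : k ≤ j) :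
    ∃ (m : ℕ) (Hs : Fin m → Set (E d)), (∀ i, IsHyperplane (Hs i)) ∧
      ∀ x : E d, x ∉ ⋃ i, Hs i →
        (Set.ncard {q : Set (E d) × Set (E d) |
            (∃ Q, IsChamber A Q ∧ q.1 ∈ facesOfDim Q j) ∧
            q.2 ∈ facesOfDim q.1 k ∧ x ∈ q.2 + normalCone q.1 q.2} : ℤ)
          = levelCharCoeff A j k := by
  obtain ⟨s, hs, rfl⟩ := exists_eq_zeroSets hA
  obtain ⟨m, Hs, hHs, hgeneric⟩ := exists_hyperplanes_isGeneric ⊤ s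
  refine ⟨m, Hs, hHs, fun x hx => ?_⟩
  have hsign : (-1 : ℤ) ^ (j + k) = (-1) ^ (j - k) := by
    rw [← Nat.sub_add_cancel hk, Nat.add_sub_cancel, add_assoc, pow_add, ← two_mul, pow_mul,
      neg_one_sq, one_pow, mul_one]
  rw [ncard_face_mem_add_normalCone hs (hgeneric x hx), levelCharCoeff_zeroSets, Nat.cast_sum]
  refine Finset.sum_congr rfl fun M hM => ?_
  rw [regionCount_eq_whitneySum ((hgeneric x hx).crossing hM), (mem_flatsOfDim.1 hM).2.2, hsign]
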